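/- arXiv:1906.09520 — 2 statements merged into one kernel-verified Lean document; each statement's English description precedes it below -/
import Mathlib

section
/- Let m ≥ 1 and let h : Fin m → ℝ satisfy h k > 0 for all k. Define f : (Fin m → ℝ) → ℝ by f(ρ) = (∑_{k} h k / ρ k + 1)⁻¹. Then f is concave on the open positive orthant {ρ : Fin m → ℝ | ∀ k, ρ k > 0}. -/
theorem aux_cs (a b s t x y : ℝ) (ha : 0 ≤ a) (hb : 0 ≤ b) (hx : 0 < x) (hy : 0 < y)
    (hz : 0 < a * x + b * y) :
    (a * s + b * t) ^ 2 / (a * x + b * y) ≤ a * s ^ 2 / x + b * t ^ 2 / y := by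
  rw [div_le_iff₀ hz]
  have h1 : (a * s ^ 2 / x + b * t ^ 2 / y) * (a * x + b * y) - (a * s + b * t) ^ 2
      = a * b * (s * y - t * x) ^ 2 / (x * y) := by
    field_simp
    ring
  have h2 : 0 ≤ a * b * (s * y - t * x) ^ 2 / (x * y) := by positivity
  linarith

/-- Proposition 1: f(ρ) = (∑ₖ h k / ρ k + 1)⁻¹ is concave on the open positive orthant,
when all h k > 0. -/
theorem stmt_0 (m : ℕ) (hm : 1 ≤ m) (h : Fin m → ℝ) (hh : ∀ k, 0 < h k) :
    ConcaveOn ℝ {ρ : Fin m → ℝ | ∀ k, 0 < ρ k}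
      (fun ρ : Fin m → ℝ => (∑ k, h k / ρ k + 1)⁻¹) := by
  have hconv : Convex ℝ {ρ : Fin m → ℝ | ∀ k, 0 < ρ k} := by
    intro x hx y hy a b ha hb hab k
    exact (convex_Ioi (0:ℝ)) (hx k) (hy k) ha hb hab
  refine ⟨hconv, ?_⟩
  intro x hx y hy a b ha hb hab
  have hz := hconv hx hy ha hb hab
  have pos : ∀ r : Fin m → ℝ, (∀ k, 0 < r k) → 0 < ∑ k, h k / r k + 1 := by
    intro r hr
    have : 0 ≤ ∑ k, h k / r k := Finset.sum_nonneg fun k _ => (div_pos (hh k) (hr k)).le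
    linarith
  have hA := pos x hx
  have hB := pos y hy
  have hC := pos _ hz
  simp only [Set.mem_setOf_eq, Pi.add_apply, Pi.smul_apply, smul_eq_mul] at hx hy hz hC ⊢
  set A := ∑ k, h k / x k + 1 with hAdef
  set B := ∑ k, h k / y k + 1 with hBdef
  set T := a * A⁻¹ + b * B⁻¹ with hT
  have hTpos : 0 < T := (convex_Ioi (0:ℝ)) (inv_pos.2 hA) (inv_pos.2 hB) ha hb hab
  have hsum : T ^ 2 * ∑ k, h k / (a * x k + b * y k)
      ≤ a * A⁻¹ ^ 2 * ∑ k, h k / x k + b * B⁻¹ ^ 2 * ∑ k, h k / y k := by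
    rw [Finset.mul_sum, Finset.mul_sum, Finset.mul_sum, ← Finset.sum_add_distrib]
    refine Finset.sum_le_sum fun k _ => ?_
    have := mul_le_mul_of_nonneg_left
      (aux_cs a b A⁻¹ B⁻¹ (x k) (y k) ha hb (hx k) (hy k) (hz k)) (hh k).le
    calc _ = h k * (T ^ 2 / (a * x k + b * y k)) := by ring
      _ ≤ _ := this
      _ = _ := by ring
  have h1 := aux_cs a b A⁻¹ B⁻¹ 1 1 ha hb one_pos one_pos (by linarith)
  simp only [mul_one, div_one, hab] at h1
  have hfin : T ^ 2 * (∑ k, h k / (a * x k + b * y k) + 1) ≤ T := by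
    calc _ ≤ a * A⁻¹ ^ 2 * A + b * B⁻¹ ^ 2 * B := by
          rw [hAdef, hBdef] at *
          linarith
      _ = T := by
          rw [hT]
          field_simp
  rw [le_inv_comm₀ hTpos hC, ← one_div, le_div_iff₀ hTpos]
  nlinarith
end

section
/- Let c₁ ≥ 0, c₂ ≥ 0, and g > 0. The function P : ℝ² × ℝ² × ℝ → ℝ defined by P(v, a, θ) = c₁‖v‖³ + (c₂/θ)(1 + ‖a‖²/g) is convex on the set ℝ² × ℝ² × {θ : θ > 0}. -/
lemma quad_over_lin (x y r s t u : ℝ) (hx : 0 ≤ x) (hy : 0 ≤ y) (ht : 0 < t) (hu : 0 < u)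
    (hw : 0 < x * t + y * u) :
    (x * r + y * s) ^ 2 / (x * t + y * u) ≤ x * (r ^ 2 / t) + y * (s ^ 2 / u) := by
  rw [div_le_iff₀ hw]
  have h : (x * (r ^ 2 / t) + y * (s ^ 2 / u)) * (x * t + y * u) - (x * r + y * s) ^ 2
      = x * y * ((r * u - s * t) ^ 2 / (t * u)) := by
    field_simp
    ring
  have h2 : 0 ≤ x * y * ((r * u - s * t) ^ 2 / (t * u)) := by positivity
  linarith

/-- The propulsion power P(v,a,θ) = c₁‖v‖³ + (c₂/θ)(1 + ‖a‖²/g) is jointly convex in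
(v, a, θ) on ℝ² × ℝ² × {θ > 0}. -/
theorem stmt_6 (c₁ c₂ g : ℝ) (hc₁ : 0 ≤ c₁) (hc₂ : 0 ≤ c₂) (hg : 0 < g) :
    ConvexOn ℝ
      {p : EuclideanSpace ℝ (Fin 2) × EuclideanSpace ℝ (Fin 2) × ℝ | 0 < p.2.2}
      (fun p : EuclideanSpace ℝ (Fin 2) × EuclideanSpace ℝ (Fin 2) × ℝ =>
        c₁ * ‖p.1‖ ^ 3 + c₂ / p.2.2 * (1 + ‖p.2.1‖ ^ 2 / g)) := by
  have norm_le : ∀ (v w : EuclideanSpace ℝ (Fin 2)) (x y : ℝ), 0 ≤ x → 0 ≤ y →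
      ‖x • v + y • w‖ ≤ x * ‖v‖ + y * ‖w‖ := by
    intro v w x y hx hy
    refine (norm_add_le _ _).trans ?_
    rw [norm_smul, norm_smul, Real.norm_of_nonneg hx, Real.norm_of_nonneg hy]
  have pos : ∀ (t u x y : ℝ), 0 < t → 0 < u → 0 ≤ x → 0 ≤ y → x + y = 1 →
      0 < x * t + y * u := by
    intro t u x y ht hu hx hy hxy
    exact (convex_Ioi (0 : ℝ)) ht hu hx hy hxy
  refine ⟨?_, ?_⟩
  · rintro ⟨v, a, t⟩ ht ⟨w, b, u⟩ hu x y hx hy hxy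
    exact pos t u x y ht hu hx hy hxy
  · rintro ⟨v, a, t⟩ ht ⟨w, b, u⟩ hu x y hx hy hxy
    change 0 < t at ht
    change 0 < u at hu
    have hw := pos t u x y ht hu hx hy hxy
    change c₁ * ‖x • v + y • w‖ ^ 3 + c₂ / (x * t + y * u) * (1 + ‖x • a + y • b‖ ^ 2 / g)
      ≤ x * (c₁ * ‖v‖ ^ 3 + c₂ / t * (1 + ‖a‖ ^ 2 / g))
        + y * (c₁ * ‖w‖ ^ 3 + c₂ / u * (1 + ‖b‖ ^ 2 / g))
    have h1 : ‖x • v + y • w‖ ^ 3 ≤ x * ‖v‖ ^ 3 + y * ‖w‖ ^ 3 :=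
      (pow_le_pow_left₀ (norm_nonneg _) (norm_le v w x y hx hy) 3).trans
        ((convexOn_pow 3).2 (norm_nonneg v) (norm_nonneg w) hx hy hxy)
    have h2 : 1 / (x * t + y * u) ≤ x * (1 / t) + y * (1 / u) := by
      have := quad_over_lin x y 1 1 t u hx hy ht hu hw
      simpa [hxy] using this
    have h3 : ‖x • a + y • b‖ ^ 2 / (x * t + y * u) ≤ x * (‖a‖ ^ 2 / t) + y * (‖b‖ ^ 2 / u) := by
      refine le_trans ?_ (quad_over_lin x y ‖a‖ ‖b‖ t u hx hy ht hu hw)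
      have := norm_le a b x y hx hy
      gcongr
    calc _ = c₁ * ‖x • v + y • w‖ ^ 3 + c₂ * (1 / (x * t + y * u))
          + c₂ / g * (‖x • a + y • b‖ ^ 2 / (x * t + y * u)) := by ring
      _ ≤ c₁ * (x * ‖v‖ ^ 3 + y * ‖w‖ ^ 3) + c₂ * (x * (1 / t) + y * (1 / u))
          + c₂ / g * (x * (‖a‖ ^ 2 / t) + y * (‖b‖ ^ 2 / u)) := by gcongr
      _ = _ := by ring
end
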